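/- Symmetrized relative entropy formula: There exists a constant C > 0 depending only on A_V and the Lipschitz constant L of V'' such that the following holds. Let F ⊆ ℤ² be finite, let ζ, ζ̃ : ∂F → ℝ, and let g : F ∪ ∂F → ℝ satisfy g = ζ − ζ̃ on ∂F. Let Q denote the pushforward of the GL measure P_F^ζ under the map h ↦ h − g|_F. Then for every coupling μ of (P_F^ζ, P_F^ζ̃), writing h̄ = (h^ζ ∨ ζ) − (h^ζ̃ ∨ ζ̃), one has | KL(P_F^ζ̃ ‖ Q) + KL(Q ‖ P_F^ζ̃) − Σ_{b∈F*} E_μ[ V''(∇(h^ζ∨ζ)(b)) · ∇g(b) · ∇(g − h̄)(b) ] | ≤ C Σ_{b∈F*} E_μ[ (|∇h̄(b)|² + |∇g(b)|²) |∇g(b)| ], where KL denotes the Kullback–Leibler divergence (relative entropy). -/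

import Mathlib

/-!
The law `Q` of `h - g` under `P` has Hamiltonian `∑_b V(∇(k ∨ ζt)(b) + ∇g(b))`, since adding `g`
turns the boundary condition `ζt` into `ζ` (`map_sub_gibbs`, `grad_vee_add`). Hence
`log (dPt/dQ)` is a constant plus a difference of Hamiltonians (`KLr_gibbs`), the constants cancel
in the symmetrized entropy, and for every coupling, writing `η`, `ηt` for the two gradients on an
edge and `a = ∇g(b)`,

`KL(Pt‖Q) + KL(Q‖Pt) = ∑_b E_μ[V(ηt + a) - V(ηt) + V(η - a) - V(η)]`.

The integrand is `∫₀¹ a (V'(ηt + sa) - V'(η - a + sa)) ds`; replacing the increment of `V'` by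
`V''(η)` times the increment `a - (η - ηt)` gives the leading term, and the Lipschitz bound on
`V''` bounds the error by `L (|η - ηt| + |a|)² |a|` (`four_point_expansion`). This gives the
constant `C = 2 L + 1`.

All these expectations are finite because the gradients have second moments: `V` lies between two
parabolas (`quadratic_lower`), and the Dirichlet energy controls `∑ h(x)²` by walking from each
vertex to the complement of `F` (`sum_sq_le`), so `exp(-H)` is dominated by a Gaussian
(`integrable_sum_sq_mul_exp`).
-/

open MeasureTheory ProbabilityTheory Real
open scoped ENNReal NNReal Classical

noncomputable section

abbrev Z2 := ℤ × ℤ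

/-- Nearest-neighbor adjacency in `ℤ²` (Euclidean distance one). -/
def adjZ (x y : Z2) : Prop := (x.1 - y.1) ^ 2 + (x.2 - y.2) ^ 2 = 1

/-- Exterior vertex boundary `∂D` of a set `D ⊆ ℤ²`. -/
def bdry (D : Set Z2) : Set Z2 := {x | x ∉ D ∧ ∃ y ∈ D, adjZ x y}

/-- Euclidean distance on `ℤ²`. -/
def edist2 (x y : Z2) : ℝ :=
  Real.sqrt (((x.1 : ℝ) - (y.1 : ℝ)) ^ 2 + ((x.2 : ℝ) - (y.2 : ℝ)) ^ 2)

/-- Euclidean distance from a point to a set. -/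
def distToSet (x : Z2) (S : Set Z2) : ℝ := sInf (edist2 x '' S)

/-- Euclidean diameter of a set in `ℤ²`. -/
def diamZ (D : Set Z2) : ℝ := sSup {d : ℝ | ∃ x ∈ D, ∃ y ∈ D, d = edist2 x y}

/-- Discrete Euclidean ball. -/
def ballZ (y : Z2) (r : ℝ) : Set Z2 := {z | edist2 z y ≤ r}

/-- Positively oriented nearest-neighbor edges with at least one endpoint in `D`. -/
def edgesOf (D : Set Z2) : Set (Z2 × Z2) :=
  {b | (b.2 = b.1 + ((1, 0) : Z2) ∨ b.2 = b.1 + ((0, 1) : Z2)) ∧ (b.1 ∈ D ∨ b.2 ∈ D)}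

/-- Positively oriented nearest-neighbor edges with both endpoints in `D`. -/
def intEdges (D : Set Z2) : Set (Z2 × Z2) :=
  {b | (b.2 = b.1 + ((1, 0) : Z2) ∨ b.2 = b.1 + ((0, 1) : Z2)) ∧ b.1 ∈ D ∧ b.2 ∈ D}

/-- Edges with one endpoint in `D` and the other in `∂D`. -/
def bdEdges (D : Set Z2) : Set (Z2 × Z2) :=
  {b | (b.2 = b.1 + ((1, 0) : Z2) ∨ b.2 = b.1 + ((0, 1) : Z2)) ∧
    ((b.1 ∈ D ∧ b.2 ∈ bdry D) ∨ (b.1 ∈ bdry D ∧ b.2 ∈ D))}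

/-- The endpoint of an edge lying outside `D` (for boundary edges). -/
def bEnd (D : Set Z2) (b : Z2 × Z2) : Z2 := if b.1 ∈ D then b.2 else b.1

/-- Discrete gradient of `f` across the oriented edge `b`. -/
def grad (f : Z2 → ℝ) (b : Z2 × Z2) : ℝ := f b.2 - f b.1

/-- `D ⊆ ℤ²` is connected (as an induced subgraph of the nearest-neighbor lattice). -/
def DiscConnected (D : Set Z2) : Prop :=
  D.Nonempty ∧ ∀ x ∈ D, ∀ y ∈ D, ∃ (n : ℕ) (p : ℕ → Z2),
    p 0 = x ∧ p n = y ∧ (∀ i ≤ n, p i ∈ D) ∧ ∀ i < n, adjZ (p i) (p (i + 1))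

/-- `h ∨ φ`: the field `h` on `D` extended by the boundary condition `φ` off `D`. -/
def vee (D : Finset Z2) (h : ↥D → ℝ) (φ : Z2 → ℝ) : Z2 → ℝ :=
  fun x => if hx : x ∈ D then h ⟨x, hx⟩ else φ x

/-- Ginzburg–Landau Hamiltonian `∑_{b ∈ D*} V(∇(h∨φ)(b))`. -/
def glEnergy (V : ℝ → ℝ) (D : Finset Z2) (φ : Z2 → ℝ) (h : ↥D → ℝ) : ℝ :=
  ∑ᶠ b ∈ edgesOf (D : Set Z2), V (grad (vee D h φ) b)

/-- Unnormalized GL measure: density `exp(−H)` w.r.t. Lebesgue measure on `ℝ^D`. -/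
def glFree (V : ℝ → ℝ) (D : Finset Z2) (φ : Z2 → ℝ) : Measure (↥D → ℝ) :=
  volume.withDensity fun h => ENNReal.ofReal (Real.exp (-(glEnergy V D φ h)))

/-- `P` is the GL measure on `D` with potential `V` and boundary condition `φ`:
a probability measure proportional to `exp(−H) dh`. -/
def IsGL (V : ℝ → ℝ) (D : Finset Z2) (φ : Z2 → ℝ) (P : Measure (↥D → ℝ)) : Prop :=
  IsProbabilityMeasure P ∧ ∃ c : ℝ≥0∞, c ≠ 0 ∧ c ≠ ⊤ ∧ P = c • glFree V D φ

/-- `μ` is a coupling of `P` and `Q`. -/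
def IsCoupling {α : Type*} [MeasurableSpace α] (μ : Measure (α × α)) (P Q : Measure α) : Prop :=
  IsProbabilityMeasure μ ∧ μ.map Prod.fst = P ∧ μ.map Prod.snd = Q

/-- `f` is discrete-harmonic at `x`: the sum of the increments to the four neighbors vanishes. -/
def DiscHarmAt (f : Z2 → ℝ) (x : Z2) : Prop :=
  f (x + ((1, 0) : Z2)) + f (x - ((1, 0) : Z2)) + f (x + ((0, 1) : Z2)) + f (x - ((0, 1) : Z2))
    - 4 * f x = 0

/-- `D(r) = {x ∈ D : dist(x, ∂D) ≥ r}`. -/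
def innerSet (D : Finset Z2) (r : ℝ) : Set Z2 :=
  {x | x ∈ D ∧ r ≤ distToSet x (bdry (D : Set Z2))}


/-- Kullback–Leibler divergence (relative entropy) `E_μ[log dμ/dν]`, via the
Radon–Nikodym derivative. -/
def KLr {Ω : Type*} [MeasurableSpace Ω] (μ ν : Measure Ω) : ℝ :=
  ∫ ω, Real.log ((μ.rnDeriv ν ω).toReal) ∂μ

/-! ### The potential -/

/-- Second-order expansion of the four-point difference that appears in the symmetrized entropy.
With `d = x - y`, the first-order terms cancel, and the remainder carries a factor `|a|` because
the left side is `∫₀¹ a (V'(y + sa) - V'(x - a + sa)) ds`. -/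
lemma four_point_expansion {V : ℝ → ℝ} {L : ℝ≥0} (hV : Differentiable ℝ V)
    (hV' : Differentiable ℝ (deriv V)) (hL : LipschitzWith L (deriv (deriv V))) (x y a : ℝ) :
    |V (y + a) - V y + (V (x - a) - V x) - deriv (deriv V) x * a * (a - (x - y))|
      ≤ (2 * L + 1) * ((|x - y| ^ 2 + |a| ^ 2) * |a|) := by
  set R := |x - y| + |a| with hR
  have hR0 : 0 ≤ R := by positivity
  have key : ∀ u ∈ Metric.closedBall x R, ∀ w ∈ Metric.closedBall x R,
      |(deriv V u - deriv (deriv V) x * u) - (deriv V w - deriv (deriv V) x * w)|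
        ≤ L * R * |u - w| := by
    intro u hu w hw
    refine Convex.norm_image_sub_le_of_norm_hasDerivWithin_le
      (f := fun z => deriv V z - deriv (deriv V) x * z)
      (f' := fun z => deriv (deriv V) z - deriv (deriv V) x * 1) (s := Metric.closedBall x R)
      ?_ ?_ (convex_closedBall x R) hw hu
    · intro z _
      exact ((hV' z).hasDerivAt.sub ((hasDerivAt_id z).const_mul _)).hasDerivWithinAt
    · intro z hz
      have h1 := hL.dist_le_mul z x
      rw [mul_one, ← dist_eq_norm]
      exact h1.trans (mul_le_mul_of_nonneg_left hz L.2)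
  have hmain := Convex.norm_image_sub_le_of_norm_hasDerivWithin_le
      (f := fun s => V (y + s * a) - V (x - a + s * a)
        - deriv (deriv V) x * a * (a - (x - y)) * s)
      (f' := fun s => deriv V (y + s * a) * (1 * a) - deriv V (x - a + s * a) * (1 * a)
        - deriv (deriv V) x * a * (a - (x - y)) * 1)
      (s := Set.Icc (0 : ℝ) 1) (C := L * R * R * |a|) (x := 0) (y := 1)
      ?_ ?_ (convex_Icc 0 1) (by simp) (by simp)
  · rw [Real.norm_eq_abs] at hmain
    have h2 : L * R * R * |a| ≤ (2 * L + 1) * ((|x - y| ^ 2 + |a| ^ 2) * |a|) := by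
      have h3 : R * R ≤ 2 * (|x - y| ^ 2 + |a| ^ 2) := by
        rw [hR]; nlinarith [sq_nonneg (|x - y| - |a|)]
      have h4 : 0 ≤ (|x - y| ^ 2 + |a| ^ 2) * |a| := by positivity
      have h5 : (L : ℝ) * (R * R) * |a| ≤ L * (2 * (|x - y| ^ 2 + |a| ^ 2)) * |a| := by gcongr
      nlinarith
    refine le_trans (le_of_eq ?_) (hmain.trans ?_)
    · congr 1
      have e1 : x - a + 1 * a = x := by ring
      have e2 : x - a + 0 * a = x - a := by ring
      simp only [e1, e2]
      ring_nf
    · simpa using h2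
  · intro s _
    have e1 : HasDerivAt (fun s : ℝ => y + s * a) (1 * a) s :=
      ((hasDerivAt_id s).mul_const a).const_add y
    have e2 : HasDerivAt (fun s : ℝ => x - a + s * a) (1 * a) s :=
      ((hasDerivAt_id s).mul_const a).const_add (x - a)
    exact ((((hV _).hasDerivAt.comp s e1).sub ((hV _).hasDerivAt.comp s e2)).sub
      ((hasDerivAt_id s).const_mul _)).hasDerivWithinAt
  · intro s hs
    have hsa : |s * a| ≤ |a| := by
      rw [abs_mul]
      exact mul_le_of_le_one_left (abs_nonneg a) (abs_le.2 ⟨by linarith [hs.1], hs.2⟩)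
    have hsa' : |-a + s * a| ≤ |a| := by
      rw [show -a + s * a = (s - 1) * a by ring, abs_mul]
      exact mul_le_of_le_one_left (abs_nonneg a) (abs_le.2 ⟨by linarith [hs.1], by linarith [hs.2]⟩)
    have h1 := key (y + s * a) (by
        rw [Metric.mem_closedBall, Real.dist_eq, show y + s * a - x = -(x - y) + s * a by ring]
        refine (abs_add_le _ _).trans ?_
        rw [abs_neg]; linarith) (x - a + s * a) (by
        rw [Metric.mem_closedBall, Real.dist_eq, show x - a + s * a - x = -a + s * a by ring]
        linarith [abs_nonneg (x - y)])
    have h2 : |y + s * a - (x - a + s * a)| ≤ R := by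
      rw [show y + s * a - (x - a + s * a) = -(x - y) + a by ring]
      refine (abs_add_le _ _).trans ?_
      rw [abs_neg]
    rw [Real.norm_eq_abs, show deriv V (y + s * a) * (1 * a) - deriv V (x - a + s * a) * (1 * a)
        - deriv (deriv V) x * a * (a - (x - y)) * 1
        = ((deriv V (y + s * a) - deriv (deriv V) x * (y + s * a)) -
          (deriv V (x - a + s * a) - deriv (deriv V) x * (x - a + s * a))) * a by ring, abs_mul]
    gcongr
    exact h1.trans (by gcongr)

/-- An even function whose second derivative is at least `m` grows at least like `m x² / 2`:
`V - m x² / 2` is convex and even, hence minimal at `0`. The bound from above on `V` is this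
statement for `-V`. -/
lemma quadratic_lower {V : ℝ → ℝ} {m : ℝ} (hV : Differentiable ℝ V)
    (hV' : Differentiable ℝ (deriv V)) (heven : ∀ x, V (-x) = V x)
    (hm : ∀ x, m ≤ deriv (deriv V) x) (x : ℝ) : V 0 + m / 2 * x ^ 2 ≤ V x := by
  have hd : deriv (fun z => V z - m / 2 * z ^ 2) = fun z => deriv V z - m * z := by
    funext z
    have : HasDerivAt (fun z : ℝ => m / 2 * z ^ 2) (m * z) z := by
      refine ((hasDerivAt_pow 2 z).const_mul (m / 2)).congr_deriv ?_
      norm_num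
      ring
    exact ((hV z).hasDerivAt.sub this).deriv
  have hc : ConvexOn ℝ Set.univ (fun z => V z - m / 2 * z ^ 2) := by
    refine convexOn_univ_of_deriv2_nonneg (by fun_prop) (by rw [hd]; fun_prop) fun z => ?_
    have h2 : deriv (fun z => deriv V z - m * z) z = deriv (deriv V) z - m * 1 :=
      ((hV' z).hasDerivAt.sub ((hasDerivAt_id z).const_mul m)).deriv
    simp only [Function.iterate_succ, Function.iterate_zero, Function.comp, id]
    rw [hd, h2]
    linarith [hm z]
  have := hc.2 (Set.mem_univ x) (Set.mem_univ (-x))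
    (by norm_num : (0 : ℝ) ≤ 1 / 2) (by norm_num : (0 : ℝ) ≤ 1 / 2) (by norm_num)
  simp only [smul_eq_mul, heven] at this
  ring_nf at this ⊢
  linarith

/-! ### Edges and coercivity of the Hamiltonian -/

lemma edgesOf_finite (F : Finset Z2) : (edgesOf (F : Set Z2)).Finite := by
  have hs : edgesOf (F : Set Z2) ⊆
      ((F : Set Z2).image (fun x => (x, x + ((1, 0) : Z2))) ∪
        (F : Set Z2).image (fun x => (x, x + ((0, 1) : Z2)))) ∪
      ((F : Set Z2).image (fun x => (x - ((1, 0) : Z2), x)) ∪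
        (F : Set Z2).image (fun x => (x - ((0, 1) : Z2), x))) := by
    rintro ⟨x, y⟩ ⟨h | h, h' | h'⟩ <;> simp only at h h' <;> subst h
    · exact Or.inl (Or.inl ⟨x, h', rfl⟩)
    · exact Or.inr (Or.inl ⟨_, h', by simp⟩)
    · exact Or.inl (Or.inr ⟨x, h', rfl⟩)
    · exact Or.inr (Or.inr ⟨_, h', by simp⟩)
  refine Set.Finite.subset ?_ hs
  have := F.finite_toSet
  exact (((this.image _).union (this.image _)).union ((this.image _).union (this.image _)))

/-- The finite set `F*` of edges with an endpoint in `F`, as a `Finset`. -/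
def edgeFinset (F : Finset Z2) : Finset (Z2 × Z2) := (edgesOf_finite F).toFinset

lemma mem_edgeFinset {F : Finset Z2} {b : Z2 × Z2} :
    b ∈ edgeFinset F ↔ b ∈ edgesOf (F : Set Z2) := by
  simp [edgeFinset]

lemma finsum_edges (F : Finset Z2) (f : Z2 × Z2 → ℝ) :
    ∑ᶠ b ∈ edgesOf (F : Set Z2), f b = ∑ b ∈ edgeFinset F, f b :=
  finsum_mem_eq_finite_toFinset_sum f (edgesOf_finite F)

lemma glEnergy_eq (V : ℝ → ℝ) (F : Finset Z2) (φ : Z2 → ℝ) (h : ↥F → ℝ) :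
    glEnergy V F φ h = ∑ b ∈ edgeFinset F, V (grad (vee F h φ) b) :=
  finsum_edges F _

lemma edge_endpoints {F : Finset Z2} {b : Z2 × Z2} (hb : b ∈ edgeFinset F) :
    (b.1 ∈ F ∨ b.1 ∈ bdry (F : Set Z2)) ∧ (b.2 ∈ F ∨ b.2 ∈ bdry (F : Set Z2)) := by
  rw [mem_edgeFinset] at hb
  obtain ⟨x, y⟩ := b
  obtain ⟨h, h'⟩ := hb
  have hadj : adjZ x y ∧ adjZ y x := by
    simp only [adjZ]
    rcases h with h | h <;> simp only at h <;> subst h <;> simp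
  simp only [Finset.mem_coe] at h' ⊢
  by_cases hx : x ∈ F <;> by_cases hy : y ∈ F
  · exact ⟨Or.inl hx, Or.inl hy⟩
  · exact ⟨Or.inl hx, Or.inr ⟨hy, x, hx, hadj.2⟩⟩
  · exact ⟨Or.inr ⟨hx, y, hy, hadj.1⟩, Or.inl hy⟩
  · tauto

/-- Adding `g` inside `F` changes the boundary condition from `ζt` to `ζ`, as seen from the edges
of `F`. -/
lemma grad_vee_add {F : Finset Z2} {ζ ζt g : Z2 → ℝ}
    (hg : ∀ x ∈ bdry (F : Set Z2), g x = ζ x - ζt x) (k : ↥F → ℝ) {b : Z2 × Z2}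
    (hb : b ∈ edgeFinset F) :
    grad (vee F (fun x => k x + g x) ζ) b = grad (vee F k ζt) b + grad g b := by
  have hp : ∀ x, (x ∈ F ∨ x ∈ bdry (F : Set Z2)) →
      vee F (fun x => k x + g x) ζ x = vee F k ζt x + g x := by
    rintro x (hx | hx)
    · simp [vee, hx]
    · have : x ∉ F := hx.1
      simp [vee, this, hg x hx]
  obtain ⟨h1, h2⟩ := edge_endpoints hb
  simp only [grad, hp _ h1, hp _ h2]
  ring

/-- Discrete Poincaré inequality: the value at `x` is reached from a boundary value by walking
along the first coordinate axis until `F` is left. -/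
lemma vee_sq_le (F : Finset Z2) (φ : Z2 → ℝ) (n : ℕ) :
    ∀ x : Z2, x + ((n : ℤ), (0 : ℤ)) ∉ F → ∃ A B : ℝ, 0 ≤ A ∧ 0 ≤ B ∧ ∀ h : ↥F → ℝ,
      (vee F h φ x) ^ 2 ≤ A + B * ∑ b ∈ edgeFinset F, (grad (vee F h φ) b) ^ 2 := by
  induction n with
  | zero =>
    intro x hx
    have hx : x ∉ F := by simpa [← Prod.zero_eq_mk] using hx
    exact ⟨φ x ^ 2, 0, sq_nonneg _, le_rfl, fun h => by simp [vee, hx]⟩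
  | succ n ih =>
    intro x hx
    by_cases hxF : x ∈ F
    · obtain ⟨A, B, hA, hB, hAB⟩ := ih (x + ((1, 0) : Z2)) (by
        convert hx using 2
        rw [add_assoc]; congr 1
        ext <;> simp [add_comm])
      refine ⟨2 * A, 2 * B + 2, by linarith, by linarith, fun h => ?_⟩
      have hb : (x, x + ((1, 0) : Z2)) ∈ edgeFinset F :=
        mem_edgeFinset.2 ⟨Or.inl rfl, Or.inl hxF⟩
      have h1 := Finset.single_le_sum
        (f := fun b => (grad (vee F h φ) b) ^ 2) (fun b _ => sq_nonneg _) hb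
      have h2 := hAB h
      simp only [grad] at h1 h2 ⊢
      nlinarith [sq_nonneg (2 * vee F h φ (x + ((1, 0) : Z2)) - vee F h φ x)]
    · exact ⟨φ x ^ 2, 0, sq_nonneg _, le_rfl, fun h => by simp [vee, hxF]⟩

lemma exists_exit (F : Finset Z2) (x : Z2) : ∃ n : ℕ, x + ((n : ℤ), (0 : ℤ)) ∉ F := by
  by_contra! hc
  refine Set.infinite_of_injective_forall_mem (f := fun n : ℕ => x + ((n : ℤ), (0 : ℤ)))
    ?_ hc F.finite_toSet
  intro m n hmn
  simpa using hmn

/-- Coercivity: the Dirichlet energy controls the squared Euclidean norm of the field. -/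
lemma sum_sq_le (F : Finset Z2) (φ : Z2 → ℝ) : ∃ A B : ℝ, 0 < B ∧ ∀ h : ↥F → ℝ,
    ∑ x, (h x) ^ 2 ≤ A + B * ∑ b ∈ edgeFinset F, (grad (vee F h φ) b) ^ 2 := by
  have hx : ∀ x : ↥F, ∃ A B : ℝ, 0 ≤ A ∧ 0 ≤ B ∧ ∀ h : ↥F → ℝ,
      (vee F h φ x) ^ 2 ≤ A + B * ∑ b ∈ edgeFinset F, (grad (vee F h φ) b) ^ 2 := fun x => by
    obtain ⟨n, hn⟩ := exists_exit F x
    exact vee_sq_le F φ n x hn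
  choose A B hA hB hAB using hx
  refine ⟨∑ x, A x, ∑ x, B x + 1, by
    have := Finset.sum_nonneg fun x (_ : x ∈ Finset.univ) => hB x
    linarith, fun h => ?_⟩
  have h0 : 0 ≤ ∑ b ∈ edgeFinset F, (grad (vee F h φ) b) ^ 2 :=
    Finset.sum_nonneg fun b _ => sq_nonneg _
  have h1 : ∑ x, (h x) ^ 2 ≤
      ∑ x, (A x + B x * ∑ b ∈ edgeFinset F, (grad (vee F h φ) b) ^ 2) := by
    refine Finset.sum_le_sum fun x _ => ?_
    have := hAB x h
    simpa [vee] using this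
  rw [Finset.sum_add_distrib, ← Finset.sum_mul] at h1
  linarith

/-! ### Second moments of the Ginzburg–Landau measure -/

lemma continuous_grad_vee (F : Finset Z2) (φ : Z2 → ℝ) (b : Z2 × Z2) :
    Continuous fun h : ↥F → ℝ => grad (vee F h φ) b := by
  have hx : ∀ x, Continuous fun h : ↥F → ℝ => vee F h φ x := fun x => by
    by_cases hx : x ∈ F
    · simp only [vee, hx, dite_true]; exact continuous_apply _
    · simp only [vee, hx, dite_false]; exact continuous_const
  exact (hx _).sub (hx _)

lemma continuous_glEnergy {V : ℝ → ℝ} (hV : Continuous V) (F : Finset Z2) (φ : Z2 → ℝ) :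
    Continuous (glEnergy V F φ) := by
  have : glEnergy V F φ = fun h => ∑ b ∈ edgeFinset F, V (grad (vee F h φ) b) :=
    funext fun h => glEnergy_eq V F φ h
  rw [this]
  exact continuous_finsetSum _ fun b _ => hV.comp (continuous_grad_vee F φ b)

lemma integrable_exp_neg_sum_sq {ι : Type*} [Fintype ι] {s : ℝ} (hs : 0 < s) :
    Integrable fun h : ι → ℝ => Real.exp (-s * ∑ x, (h x) ^ 2) := by
  have := Integrable.fintype_prod (ι := ι) (μ := fun _ => (volume : Measure ℝ))
    (f := fun _ x => Real.exp (-s * x ^ 2)) fun _ => integrable_exp_neg_mul_sq hs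
  refine this.congr (ae_of_all _ fun h => ?_)
  simp only
  rw [← Real.exp_sum, Finset.mul_sum]

/-- `|h|² exp(-H(h))` is Lebesgue integrable, by comparison with a Gaussian. -/
lemma integrable_sum_sq_mul_exp {V : ℝ → ℝ} {aV : ℝ} (ha : 0 < aV) (hVc : Continuous V)
    (hq : ∀ x, V 0 + aV / 2 * x ^ 2 ≤ V x) (F : Finset Z2) (φ : Z2 → ℝ) :
    Integrable fun h : ↥F → ℝ => (∑ x, (h x) ^ 2) * Real.exp (-(glEnergy V F φ h)) := by
  obtain ⟨A, B, hB, hAB⟩ := sum_sq_le F φ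
  -- `exp(-H) ≤ exp(K - 2 s |h|²)`, and one factor `exp(-s |h|²)` absorbs `|h|²`.
  set s := aV / (4 * B) with hs
  have hs0 : 0 < s := by positivity
  set K := 2 * s * A - (edgeFinset F).card * V 0 with hK
  have hH : ∀ h : ↥F → ℝ, -(glEnergy V F φ h) ≤ K - 2 * s * ∑ x, (h x) ^ 2 := by
    intro h
    have h1 : ∑ b ∈ edgeFinset F, (V 0 + aV / 2 * (grad (vee F h φ) b) ^ 2) ≤ glEnergy V F φ h := by
      rw [glEnergy_eq]
      exact Finset.sum_le_sum fun b _ => hq _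
    rw [Finset.sum_add_distrib, ← Finset.mul_sum, Finset.sum_const, nsmul_eq_mul] at h1
    have h2 := mul_le_mul_of_nonneg_left (hAB h) (by positivity : 0 ≤ 2 * s)
    have h3 : 2 * s * B = aV / 2 := by rw [hs]; field_simp; ring
    have h4 : 2 * s * (A + B * ∑ b ∈ edgeFinset F, (grad (vee F h φ) b) ^ 2)
        = 2 * s * A + aV / 2 * ∑ b ∈ edgeFinset F, (grad (vee F h φ) b) ^ 2 := by
      rw [← h3]; ring
    rw [hK]; linarith
  refine ((integrable_exp_neg_sum_sq (ι := ↥F) hs0).const_mul (Real.exp K / s)).mono' ?_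
    (ae_of_all _ fun h => ?_)
  · have := continuous_glEnergy hVc F φ
    exact (Continuous.mul (by fun_prop) (by fun_prop)).aestronglyMeasurable
  · have hS : 0 ≤ ∑ x, (h x) ^ 2 := Finset.sum_nonneg fun x _ => sq_nonneg _
    rw [Real.norm_of_nonneg (by positivity)]
    have hE := Real.exp_le_exp.2 (hH h)
    generalize ∑ x, (h x) ^ 2 = S at hS hE ⊢
    have h1 : S * Real.exp (-s * S) ≤ 1 / s := by
      rw [le_div_iff₀ hs0, neg_mul, Real.exp_neg, mul_right_comm, ← div_eq_mul_inv,
        div_le_one (Real.exp_pos _)]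
      linarith [Real.add_one_le_exp (s * S)]
    calc S * Real.exp (-(glEnergy V F φ h)) ≤ S * Real.exp (K - 2 * s * S) := by gcongr
      _ = (S * Real.exp (-s * S)) * (Real.exp K * Real.exp (-s * S)) := by
        rw [mul_assoc S, ← Real.exp_add, ← Real.exp_add]; congr 2; ring
      _ ≤ 1 / s * (Real.exp K * Real.exp (-s * S)) := by gcongr
      _ = Real.exp K / s * Real.exp (-s * S) := by ring

lemma IsGL.memLp_eval {V : ℝ → ℝ} {aV : ℝ} (ha : 0 < aV) (hVc : Continuous V)
    (hq : ∀ x, V 0 + aV / 2 * x ^ 2 ≤ V x) {F : Finset Z2} {φ : Z2 → ℝ} {P : Measure (↥F → ℝ)}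
    (hP : IsGL V F φ P) (x : ↥F) : MemLp (fun h : ↥F → ℝ => h x) 2 P := by
  obtain ⟨_, c, hc0, hct, rfl⟩ := hP
  rw [memLp_two_iff_integrable_sq (measurable_pi_apply x).aestronglyMeasurable]
  refine Integrable.smul_measure ?_ hct
  have hm := (continuous_glEnergy hVc F φ).measurable
  rw [glFree, integrable_withDensity_iff (by fun_prop) (by simp)]
  refine (integrable_sum_sq_mul_exp ha hVc hq F φ).mono' (by fun_prop) (ae_of_all _ fun h => ?_)
  rw [ENNReal.toReal_ofReal (by positivity), Real.norm_of_nonneg (by positivity)]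
  gcongr
  exact Finset.single_le_sum (f := fun x => (h x) ^ 2) (fun x _ => sq_nonneg _) (Finset.mem_univ x)

lemma IsGL.memLp_grad {V : ℝ → ℝ} {aV : ℝ} (ha : 0 < aV) (hVc : Continuous V)
    (hq : ∀ x, V 0 + aV / 2 * x ^ 2 ≤ V x) {F : Finset Z2} {φ : Z2 → ℝ} {P : Measure (↥F → ℝ)}
    (hP : IsGL V F φ P) (b : Z2 × Z2) : MemLp (fun h : ↥F → ℝ => grad (vee F h φ) b) 2 P := by
  have := hP.1
  have hx : ∀ x, MemLp (fun h : ↥F → ℝ => vee F h φ x) 2 P := fun x => by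
    by_cases hx : x ∈ F
    · simp only [vee, hx, dite_true]; exact hP.memLp_eval ha hVc hq _
    · simp only [vee, hx, dite_false]; exact memLp_const _
  exact (hx _).sub (hx _)

/-- A continuous function between two quadratics is integrable along a square-integrable
function, also after a shift. -/
lemma integrable_potential {Ω : Type*} [MeasurableSpace Ω] {P : Measure Ω} [IsFiniteMeasure P]
    {V : ℝ → ℝ} {m M : ℝ} (hVc : Continuous V)
    (hl : ∀ x, V 0 + m / 2 * x ^ 2 ≤ V x) (hu : ∀ x, V x ≤ V 0 + M / 2 * x ^ 2)
    {f : Ω → ℝ} (hf : MemLp f 2 P) (a : ℝ) : Integrable (fun ω => V (f ω + a)) P := by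
  have h1 : Integrable (fun ω => (f ω + a) ^ 2) P := (hf.add (memLp_const a)).integrable_sq
  refine ((integrable_const |V 0|).add (h1.const_mul (|m / 2| + |M / 2|))).mono'
    (hVc.comp_aestronglyMeasurable (hf.1.add aestronglyMeasurable_const)) (ae_of_all _ fun ω => ?_)
  have hl := hl (f ω + a)
  have hu := hu (f ω + a)
  simp only [Pi.add_apply, Real.norm_eq_abs]
  have e1 : -|m / 2| * (f ω + a) ^ 2 ≤ m / 2 * (f ω + a) ^ 2 :=
    mul_le_mul_of_nonneg_right (neg_abs_le _) (sq_nonneg _)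
  have e2 : M / 2 * (f ω + a) ^ 2 ≤ |M / 2| * (f ω + a) ^ 2 :=
    mul_le_mul_of_nonneg_right (le_abs_self _) (sq_nonneg _)
  have e3 : 0 ≤ |m / 2| * (f ω + a) ^ 2 := by positivity
  have e4 : 0 ≤ |M / 2| * (f ω + a) ^ 2 := by positivity
  rw [abs_le]
  constructor <;> linarith [neg_abs_le (V 0), le_abs_self (V 0)]

/-! ### Relative entropy of Gibbs measures -/

/-- Two Gibbs probability measures `c e^{-f} ν` and `c' e^{-f'} ν` have relative density
`(c / c') e^{f' - f}`. -/
lemma KLr_gibbs {Ω : Type*} [MeasurableSpace Ω] {ν : Measure Ω} {f f' : Ω → ℝ}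
    (hf : Measurable f) (hf' : Measurable f') {c c' : ℝ≥0∞} (hc : c ≠ 0) (hct : c ≠ ⊤)
    (hc' : c' ≠ 0) (hct' : c' ≠ ⊤) {P P' : Measure Ω} [IsProbabilityMeasure P]
    [IsProbabilityMeasure P']
    (hP : P = c • ν.withDensity fun ω => ENNReal.ofReal (Real.exp (-f ω)))
    (hP' : P' = c' • ν.withDensity fun ω => ENNReal.ofReal (Real.exp (-f' ω)))
    (hint : Integrable (fun ω => f' ω - f ω) P) :
    KLr P P' = Real.log c.toReal - Real.log c'.toReal + ∫ ω, (f' ω - f ω) ∂P := by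
  have hd : P = P'.withDensity
      fun ω => c / c' * ENNReal.ofReal (Real.exp (f' ω - f ω)) := by
    rw [hP', withDensity_smul_measure, ← withDensity_mul _ (by fun_prop) (by fun_prop), hP,
      ← withDensity_smul _ (by fun_prop), ← withDensity_smul _ (by fun_prop)]
    congr 1
    funext ω
    simp only [Pi.smul_apply, Pi.mul_apply, smul_eq_mul]
    rw [show -f ω = -f' ω + (f' ω - f ω) by ring, Real.exp_add,
      ENNReal.ofReal_mul (by positivity)]
    calc _ = (c' * (c / c')) * (ENNReal.ofReal (Real.exp (-f' ω)) *
          ENNReal.ofReal (Real.exp (f' ω - f ω))) := by rw [ENNReal.mul_div_cancel hc' hct']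
      _ = _ := by ring
  have hac : P ≪ P' := by rw [hd]; exact withDensity_absolutelyContinuous _ _
  have hrn : P.rnDeriv P' =ᵐ[P'] fun ω => c / c' * ENNReal.ofReal (Real.exp (f' ω - f ω)) := by
    conv_lhs => rw [hd]
    exact Measure.rnDeriv_withDensity _ (by fun_prop)
  have hlog : ∀ᵐ ω ∂P, Real.log (P.rnDeriv P' ω).toReal
      = (Real.log c.toReal - Real.log c'.toReal) + (f' ω - f ω) := by
    filter_upwards [hac.ae_le hrn] with ω hω
    have h1 : c.toReal ≠ 0 := (ENNReal.toReal_pos hc hct).ne'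
    have h2 : c'.toReal ≠ 0 := (ENNReal.toReal_pos hc' hct').ne'
    rw [hω, ENNReal.toReal_mul, ENNReal.toReal_div, ENNReal.toReal_ofReal (by positivity),
      Real.log_mul (div_ne_zero h1 h2) (by positivity), Real.log_exp, Real.log_div h1 h2]
  rw [KLr, integral_congr_ae hlog, integral_add (integrable_const _) hint]
  simp

/-- Translating a Gibbs measure on `ℝ^ι` translates its Hamiltonian. -/
lemma map_sub_gibbs {ι : Type*} [Fintype ι] (H : (ι → ℝ) → ℝ) (c : ℝ≥0∞)
    (v : ι → ℝ) :
    (c • (volume : Measure (ι → ℝ)).withDensity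
        fun h => ENNReal.ofReal (Real.exp (-H h))).map (fun h x => h x - v x)
      = c • (volume : Measure (ι → ℝ)).withDensity
        fun k => ENNReal.ofReal (Real.exp (-H (fun x => k x + v x))) := by
  have hm : Measurable fun (h : ι → ℝ) x => h x - v x := by fun_prop
  have hm' : Measurable fun (h : ι → ℝ) x => h x + v x := by fun_prop
  rw [Measure.map_smul]
  congr 1
  ext s hs
  rw [Measure.map_apply hm hs, withDensity_apply _ (hm hs), withDensity_apply _ hs,
    ← lintegral_indicator (hm hs), ← lintegral_indicator hs,
    ← lintegral_add_right_eq_self _ v]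
  refine lintegral_congr fun k => ?_
  simp only [Set.indicator, Set.mem_preimage, Pi.add_apply, add_sub_cancel_right]
  rfl

/-- Symmetrized relative entropy formula.
There is `C > 0` depending only on `A_V` and the Lipschitz constant `L` of `V''` such that:
for finite `F ⊆ ℤ²`, boundary data `ζ, ζ̃`, any `g` with `g = ζ − ζ̃` on `∂F`, `Q` the law of
`h^ζ − g`, and any coupling `μ` of `(P_F^ζ, P_F^ζ̃)`, the symmetrized entropy
`KL(P^ζ̃‖Q) + KL(Q‖P^ζ̃)` equals `Σ_{b∈F*} E_μ[V''(∇(h^ζ∨ζ)(b)) ∇g(b) ∇(g−h̄)(b)]` up to an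
error at most `C Σ_{b∈F*} E_μ[(|∇h̄(b)|² + |∇g(b)|²)|∇g(b)|]`. -/
theorem symmetrized_relative_entropy (AV : ℝ) (L : ℝ≥0) :
    ∃ C : ℝ, 0 < C ∧
      ∀ (V : ℝ → ℝ) (aV : ℝ), 0 < aV →
        ContDiff ℝ 2 V → (∀ x, V (-x) = V x) →
        (∀ x, aV ≤ deriv (deriv V) x) → (∀ x, deriv (deriv V) x ≤ AV) →
        LipschitzWith L (deriv (deriv V)) →
      ∀ (F : Finset Z2) (ζ ζt g : Z2 → ℝ),
        (∀ x ∈ bdry (F : Set Z2), g x = ζ x - ζt x) →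
      ∀ Q P Pt : Measure (↥F → ℝ),
        IsGL V F ζ P → IsGL V F ζt Pt →
        Q = P.map (fun h => fun x : ↥F => h x - g ↑x) →
      ∀ μ : Measure ((↥F → ℝ) × (↥F → ℝ)), IsCoupling μ P Pt →
        |KLr Pt Q + KLr Q Pt -
            ∑ᶠ b ∈ edgesOf (F : Set Z2),
              ∫ ω, deriv (deriv V) (grad (vee F ω.1 ζ) b) * grad g b *
                (grad g b - grad (fun z => vee F ω.1 ζ z - vee F ω.2 ζt z) b) ∂μ|
          ≤ C * ∑ᶠ b ∈ edgesOf (F : Set Z2),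
              ∫ ω, (|grad (fun z => vee F ω.1 ζ z - vee F ω.2 ζt z) b| ^ 2
                  + |grad g b| ^ 2) * |grad g b| ∂μ := by
  refine ⟨2 * L + 1, by positivity, ?_⟩
  intro V aV ha hV2 heven hlow hupp hLip F ζ ζt g hg Q P Pt hP hPt hQ μ hμ
  have hVd : Differentiable ℝ V := hV2.differentiable (by norm_num)
  have hV2' : ContDiff ℝ (1 + 1) V := by rw [one_add_one_eq_two]; exact hV2
  have hVd' : Differentiable ℝ (deriv V) :=
    (contDiff_succ_iff_deriv.1 hV2').2.2.differentiable (by norm_num)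
  have hVc : Continuous V := hVd.continuous
  have hql := quadratic_lower hVd hVd' heven hlow
  have hqu : ∀ x, V x ≤ V 0 + AV / 2 * x ^ 2 := by
    intro x
    have hdn : deriv (fun z => -V z) = fun z => -deriv V z := by funext z; simp
    have := quadratic_lower (V := fun z => -V z) (m := -AV) hVd.neg
      (by rw [hdn]; exact hVd'.neg) (fun x => by rw [heven])
      (fun x => by rw [hdn]; simpa using hupp x) x
    linarith
  obtain ⟨hμp, hμ1, hμ2⟩ := hμ
  have hPp := hP.1
  have hPtp := hPt.1
  have hsub : Measurable fun (h : ↥F → ℝ) (x : ↥F) => h x - g x := by fun_prop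
  have hadd : Measurable fun (h : ↥F → ℝ) (x : ↥F) => h x + g x := by fun_prop
  have hQp : IsProbabilityMeasure Q := by
    rw [hQ]; exact Measure.isProbabilityMeasure_map hsub.aemeasurable
  -- The gradient fields of `h ∨ ζ` and `h ∨ ζt`.
  set η : Z2 × Z2 → (↥F → ℝ) → ℝ := fun b h => grad (vee F h ζ) b with hη
  set ηt : Z2 × Z2 → (↥F → ℝ) → ℝ := fun b h => grad (vee F h ζt) b with hηt
  have mη : ∀ b, MemLp (η b) 2 P := fun b => hP.memLp_grad ha hVc hql b
  have mηt : ∀ b, MemLp (ηt b) 2 Pt := fun b => hPt.memLp_grad ha hVc hql b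
  have iη : ∀ b a, Integrable (fun h => V (η b h + a)) P := fun b a =>
    integrable_potential hVc hql hqu (mη b) a
  have iηt : ∀ b a, Integrable (fun h => V (ηt b h + a)) Pt := fun b a =>
    integrable_potential hVc hql hqu (mηt b) a
  -- The Hamiltonians of `Q` and `Pt`, evaluated below at `k` and at the shifted field `h - g`.
  set Hq : (↥F → ℝ) → ℝ := fun k => glEnergy V F ζ (fun x => k x + g x) with hHq
  set Ht : (↥F → ℝ) → ℝ := glEnergy V F ζt with hHt
  have mHt : Measurable Ht := (continuous_glEnergy hVc F ζt).measurable
  have mHq : Measurable Hq := (continuous_glEnergy hVc F ζ).measurable.comp hadd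
  have mD : Measurable fun k => Ht k - Hq k := mHt.sub mHq
  have mD' : Measurable fun k => Hq k - Ht k := mHq.sub mHt
  have eHq : ∀ k, Hq k = ∑ b ∈ edgeFinset F, V (ηt b k + grad g b) := fun k => by
    rw [hHq]; simp only
    rw [glEnergy_eq]
    exact Finset.sum_congr rfl fun b hb => by rw [grad_vee_add hg k hb]
  have eHt : ∀ k, Ht k = ∑ b ∈ edgeFinset F, V (ηt b k + 0) := fun k => by
    rw [hHt, glEnergy_eq]; simp [hηt]
  have eHq' : ∀ h : ↥F → ℝ, Hq (fun x => h x - g x) = ∑ b ∈ edgeFinset F, V (η b h + 0) :=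
    fun h => by
      rw [hHq]; simp only [sub_add_cancel]
      rw [glEnergy_eq]; simp [hη]
  have eHt' : ∀ h : ↥F → ℝ,
      Ht (fun x => h x - g x) = ∑ b ∈ edgeFinset F, V (η b h + -grad g b) := fun h => by
    rw [hHt, glEnergy_eq]
    refine Finset.sum_congr rfl fun b hb => ?_
    have := grad_vee_add hg (fun x => h x - g x) hb
    simp only [sub_add_cancel] at this
    simp only [hη, this]
    congr 1; ring
  have iPt : Integrable (fun k => Hq k - Ht k) Pt := by
    simp only [eHq, eHt]
    exact (integrable_finsetSum _ fun b _ => iηt b _).sub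
      (integrable_finsetSum _ fun b _ => iηt b _)
  have iP : Integrable (fun h : ↥F → ℝ => Ht (fun x => h x - g x) - Hq (fun x => h x - g x)) P := by
    simp only [eHq', eHt']
    exact (integrable_finsetSum _ fun b _ => iη b _).sub
      (integrable_finsetSum _ fun b _ => iη b _)
  have iQ : Integrable (fun k => Ht k - Hq k) Q := by
    rw [hQ, integrable_map_measure mD.aestronglyMeasurable hsub.aemeasurable]
    exact iP
  -- The normalizing constants cancel in the symmetrized entropy.
  have hKL : KLr Pt Q + KLr Q Pt = ∫ k, (Hq k - Ht k) ∂Pt +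
      ∫ h : ↥F → ℝ, (Ht (fun x => h x - g x) - Hq (fun x => h x - g x)) ∂P := by
    obtain ⟨_, c, hc, hct, hPc⟩ := hP
    obtain ⟨_, c', hc', hct', hPtc⟩ := hPt
    have hQc : Q = c • volume.withDensity fun k => ENNReal.ofReal (Real.exp (-Hq k)) := by
      rw [hQ, hPc]
      exact map_sub_gibbs (glEnergy V F ζ) c (fun x : ↥F => g x)
    have h1 := KLr_gibbs mHt mHq hc' hct' hc hct hPtc hQc iPt
    have h2 := KLr_gibbs mHq mHt hc hct hc' hct' hQc hPtc iQ
    have h3 : ∫ k, (Ht k - Hq k) ∂Q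
        = ∫ h : ↥F → ℝ, (Ht (fun x => h x - g x) - Hq (fun x => h x - g x)) ∂P := by
      rw [hQ, integral_map hsub.aemeasurable mD.aestronglyMeasurable]
    rw [h1, h2, h3]; ring
  have q1 : MeasurePreserving Prod.fst μ P := ⟨measurable_fst, hμ1⟩
  have q2 : MeasurePreserving Prod.snd μ Pt := ⟨measurable_snd, hμ2⟩
  have jη : ∀ b a, Integrable (fun ω : (↥F → ℝ) × (↥F → ℝ) => V (η b ω.1 + a)) μ := fun b a =>
    q1.integrable_comp_of_integrable (iη b a)
  have jηt : ∀ b a, Integrable (fun ω : (↥F → ℝ) × (↥F → ℝ) => V (ηt b ω.2 + a)) μ := fun b a =>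
    q2.integrable_comp_of_integrable (iηt b a)
  have nη : ∀ b, MemLp (fun ω : (↥F → ℝ) × (↥F → ℝ) => η b ω.1) 2 μ := fun b =>
    (mη b).comp_measurePreserving q1
  have nηt : ∀ b, MemLp (fun ω : (↥F → ℝ) × (↥F → ℝ) => ηt b ω.2) 2 μ := fun b =>
    (mηt b).comp_measurePreserving q2
  set T : Z2 × Z2 → (↥F → ℝ) × (↥F → ℝ) → ℝ := fun b ω =>
    V (ηt b ω.2 + grad g b) - V (ηt b ω.2 + 0) + (V (η b ω.1 + -grad g b) - V (η b ω.1 + 0)) with hT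
  have iT : ∀ b, Integrable (T b) μ := fun b =>
    ((jηt b _).sub (jηt b _)).add ((jη b _).sub (jη b _))
  have hKL' : KLr Pt Q + KLr Q Pt = ∑ b ∈ edgeFinset F, ∫ ω, T b ω ∂μ := by
    have e1 : ∫ k, (Hq k - Ht k) ∂Pt = ∫ ω, (Hq ω.2 - Ht ω.2) ∂μ := by
      rw [← hμ2, integral_map measurable_snd.aemeasurable mD'.aestronglyMeasurable]
    have e2 : ∫ h : ↥F → ℝ, (Ht (fun x => h x - g x) - Hq (fun x => h x - g x)) ∂P
        = ∫ ω, (Ht (fun x => ω.1 x - g x) - Hq (fun x => ω.1 x - g x)) ∂μ := by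
      rw [← hμ1]
      exact integral_map measurable_fst.aemeasurable (mD.comp hsub).aestronglyMeasurable
    have i2 : Integrable (fun ω : (↥F → ℝ) × (↥F → ℝ) => Hq ω.2 - Ht ω.2) μ :=
      q2.integrable_comp_of_integrable iPt
    have i1 : Integrable (fun ω : (↥F → ℝ) × (↥F → ℝ) =>
        Ht (fun x => ω.1 x - g x) - Hq (fun x => ω.1 x - g x)) μ :=
      q1.integrable_comp_of_integrable iP
    rw [hKL, e1, e2, ← integral_add i2 i1, ← integral_finsetSum _ fun b _ => iT b]
    refine integral_congr_ae (ae_of_all _ fun ω => ?_)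
    simp only [hT, Finset.sum_add_distrib, Finset.sum_sub_distrib]
    rw [eHq' ω.1, eHt' ω.1, eHq ω.2, eHt ω.2]
  have hgrad : ∀ b (ω : (↥F → ℝ) × (↥F → ℝ)),
      grad (fun z => vee F ω.1 ζ z - vee F ω.2 ζt z) b = η b ω.1 - ηt b ω.2 := fun b ω => by
    simp only [hη, hηt, grad]; ring
  have hV''c : Continuous (deriv (deriv V)) := hLip.continuous
  -- Integrability of the leading term: `V''` is bounded and the gradients are integrable.
  have iM : ∀ b, Integrable (fun ω : (↥F → ℝ) × (↥F → ℝ) => deriv (deriv V) (η b ω.1) * grad g b *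
      (grad g b - (η b ω.1 - ηt b ω.2))) μ := fun b => by
    have h1 : Integrable (fun ω : (↥F → ℝ) × (↥F → ℝ) =>
        grad g b - (η b ω.1 - ηt b ω.2)) μ :=
      (integrable_const _).sub (((nη b).integrable (by norm_num)).sub
        ((nηt b).integrable (by norm_num)))
    refine h1.bdd_mul (c := AV * |grad g b|)
      ((hV''c.comp_aestronglyMeasurable (nη b).1).mul_const _) (ae_of_all _ fun ω => ?_)
    rw [norm_mul, Real.norm_eq_abs, Real.norm_eq_abs]
    gcongr
    exact abs_le.2 ⟨by linarith [hlow (η b ω.1), hlow 0, hupp 0], hupp _⟩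
  have iR : ∀ b, Integrable (fun ω : (↥F → ℝ) × (↥F → ℝ) =>
      (|η b ω.1 - ηt b ω.2| ^ 2 + |grad g b| ^ 2) * |grad g b|) μ := fun b => by
    simp only [sq_abs]
    exact ((((nη b).sub (nηt b)).integrable_sq).add (integrable_const _)).mul_const _
  rw [finsum_edges, finsum_edges, hKL']
  simp only [hgrad]
  rw [← Finset.sum_sub_distrib, Finset.mul_sum]
  refine (Finset.abs_sum_le_sum_abs _ _).trans (Finset.sum_le_sum fun b _ => ?_)
  rw [← integral_sub (iT b) (iM b), ← integral_const_mul]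
  refine abs_integral_le_integral_abs.trans
    (integral_mono ((iT b).sub (iM b)).abs ((iR b).const_mul _) fun ω => ?_)
  have := four_point_expansion hVd hVd' hLip (η b ω.1) (ηt b ω.2) (grad g b)
  simpa only [hT, add_zero, ← sub_eq_add_neg] using this

end
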